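/- For any p ∈ P_n, q ∈ P_m, and any coupling M ∈ C(p,q), it holds that H(M) ≥ H(p ∧ q). Consequently, min_{N ∈ C(p,q)} H(N) ≥ H(p ∧ q). -/

import Mathlib

/-!
Let `Z i` be the minimum of the `i`-th prefix sums of `p` and `q`, so that `p ∧ q` has entries
`Z (k + 1) - Z k`. Any `i` cells of `M` meet at most `i` rows and at most `i` columns, so their
total mass is at most `Z i` (`sum_cells_le`, based on `sum_le_prefSum`). List the positive entries
of `M` in decreasing order as `r 0 ≥ ... ≥ r (K - 1) > 0`; the prefix sums of `r` are then at most
those of `z = p ∧ q`, and both reach `1` at `K`, so that `z` vanishes from `K` on. Hence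

`H(z) ≤ ∑ z (-log r) ≤ ∑ r (-log r) = H(M)`,

where the first step is Gibbs' inequality and the second is Abel summation, `-log r` being
increasing (`abel_le`). Restricting to the positive entries keeps `log r` meaningful, and
only the order of `r` is needed, not that of `z`.
-/

open Finset

/-- Sum of the first `i` components (0-indexed) of a vector; for `i ≥ n` this is the total
sum, which implements zero padding. -/
noncomputable def prefSum {n : ℕ} (p : Fin n → ℝ) (i : ℕ) : ℝ :=
  ∑ k : Fin n, if (k : ℕ) < i then p k else 0

/-- Membership in `P_n`: sorted non-increasingly, nonnegative components, summing to 1. -/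
def IsProbVec {n : ℕ} (p : Fin n → ℝ) : Prop :=
  (∀ i j : Fin n, i ≤ j → p j ≤ p i) ∧ (∀ i, 0 ≤ p i) ∧ (∑ i, p i) = 1

/-- Majorization `p ≼ q` (the shorter vector being padded with zeros). -/
def Maj {n m : ℕ} (p : Fin n → ℝ) (q : Fin m → ℝ) : Prop :=
  ∀ i : ℕ, prefSum p i ≤ prefSum q i
/-- The greatest lower bound `p ∧ q` in the majorization lattice `(P_n, ≼)`:
`z₁ = min (p₁, q₁)` and `zᵢ = min (∑_{j≤i} pⱼ, ∑_{j≤i} qⱼ) − ∑_{j<i} zⱼ`, i.e. its prefix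
sums are the minima of the corresponding prefix sums of `p` and `q`. -/
noncomputable def glbVec {n : ℕ} (p q : Fin n → ℝ) : Fin n → ℝ :=
  fun i => min (prefSum p ((i : ℕ) + 1)) (prefSum q ((i : ℕ) + 1)) -
    min (prefSum p (i : ℕ)) (prefSum q (i : ℕ))
/-- Shannon entropy (base-2 logarithm, with the convention `0 · log (1/0) = 0`). -/
noncomputable def H2 {n : ℕ} (p : Fin n → ℝ) : ℝ :=
  ∑ i, -(p i * Real.logb 2 (p i))
/-- `M ∈ C(p,q)`: a coupling of `p` and `q`. -/
def IsCoupling {n m : ℕ} (M : Fin n → Fin m → ℝ) (p : Fin n → ℝ) (q : Fin m → ℝ) : Prop :=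
  (∀ i j, 0 ≤ M i j) ∧ (∀ i, (∑ j, M i j) = p i) ∧ (∀ j, (∑ i, M i j) = q j)

/-- Shannon entropy of the vector of entries of a matrix. -/
noncomputable def H2mat {n m : ℕ} (M : Fin n → Fin m → ℝ) : ℝ :=
  ∑ i, ∑ j, -(M i j * Real.logb 2 (M i j))
/-- Zero padding of a vector to length `N`. -/
def padTo {n : ℕ} (p : Fin n → ℝ) (N : ℕ) : Fin N → ℝ :=
  fun i => if h : (i : ℕ) < n then p ⟨i, h⟩ else 0

/-- Among all sets of at most `i` indices, the first `i` carry the most mass of a sorted vector. -/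
theorem sum_le_prefSum {n : ℕ} {p : Fin n → ℝ} (hp : IsProbVec p) (I : Finset (Fin n)) (i : ℕ)
    (hI : I.card ≤ i) : ∑ k ∈ I, p k ≤ prefSum p i := by
  obtain ⟨hs, h0, -⟩ := hp
  unfold prefSum
  by_cases hi : i < n
  · -- Compare the excess over the threshold `t = p i` term by term.
    set t := p ⟨i, hi⟩ with ht
    have h1 : ∑ k : Fin n, (if k ∈ I then p k - t else 0) ≤
        ∑ k : Fin n, (if (k : ℕ) < i then p k - t else 0) := by
      refine Finset.sum_le_sum fun k _ => ?_
      by_cases hk : (k : ℕ) < i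
      · have : t ≤ p k := hs _ _ (Fin.le_def.2 hk.le)
        split_ifs <;> linarith
      · have : p k ≤ t := hs _ _ (Fin.le_def.2 (not_lt.1 hk))
        split_ifs <;> linarith
    have h2 : ∑ k : Fin n, (if (k : ℕ) < i then t else 0) = i * t := by
      rw [Fin.sum_univ_eq_sum_range (fun k => if k < i then t else 0) n, ← Finset.sum_filter,
        Finset.sum_const, nsmul_eq_mul]
      congr 2
      have : (Finset.range n).filter (fun k => k < i) = Finset.range i := by
        ext k; simp; omega
      rw [this, Finset.card_range]
    have h3 : ∑ k : Fin n, (if (k : ℕ) < i then p k - t else 0) =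
        ∑ k : Fin n, (if (k : ℕ) < i then p k else 0) - i * t := by
      rw [← h2, ← Finset.sum_sub_distrib]
      refine Finset.sum_congr rfl fun k _ => ?_
      split_ifs <;> simp
    have h4 : ∑ k : Fin n, (if k ∈ I then p k - t else 0) = ∑ k ∈ I, p k - I.card * t := by
      rw [Finset.sum_ite_mem, Finset.univ_inter, Finset.sum_sub_distrib, Finset.sum_const,
        nsmul_eq_mul]
    have h5 : (I.card : ℝ) * t ≤ i * t :=
      mul_le_mul_of_nonneg_right (by exact_mod_cast hI) (h0 _)
    linarith
  · have : ∑ k : Fin n, (if (k : ℕ) < i then p k else 0) = ∑ k, p k :=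
      Finset.sum_congr rfl fun k _ => if_pos (by omega)
    rw [this]
    exact Finset.sum_le_sum_of_subset_of_nonneg (Finset.subset_univ _) fun k _ _ => h0 k

theorem prefSum_of_le {n : ℕ} (p : Fin n → ℝ) {i : ℕ} (h : n ≤ i) : prefSum p i = ∑ k, p k :=
  Finset.sum_congr rfl fun k _ => if_pos (by omega)

theorem prefSum_mono {n : ℕ} {p : Fin n → ℝ} (h0 : ∀ i, 0 ≤ p i) : Monotone (prefSum p) := by
  intro i j hij
  refine Finset.sum_le_sum fun k _ => ?_
  have := h0 k
  split_ifs <;> linarith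

theorem prefSum_zero {n : ℕ} (p : Fin n → ℝ) : prefSum p 0 = 0 := by
  simp [prefSum]

theorem prefSum_padTo {n : ℕ} (p : Fin n → ℝ) {N : ℕ} (h : n ≤ N) (i : ℕ) :
    prefSum (padTo p N) i = prefSum p i := by
  unfold prefSum padTo
  -- Both sums run over `range` of a common function on `ℕ`.
  let g : ℕ → ℝ := fun k => if k < i then (if hk : k < n then p ⟨k, hk⟩ else 0) else 0
  have h1 := Fin.sum_univ_eq_sum_range g N
  have h2 := Fin.sum_univ_eq_sum_range g n
  have h3 : ∑ k ∈ Finset.range n, g k = ∑ k ∈ Finset.range N, g k := by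
    refine Finset.sum_subset (Finset.range_mono h) fun k _ hk => ?_
    have : ¬ k < n := by simpa using hk
    simp [g, this]
  calc _ = ∑ k ∈ Finset.range N, g k := h1
    _ = ∑ k ∈ Finset.range n, g k := h3.symm
    _ = _ := by
      rw [← h2]
      refine Finset.sum_congr rfl fun k _ => ?_
      simp [g]

/-- A set of at most `i` cells lies in at most `i` rows and at most `i` columns. -/
theorem sum_cells_le {n m : ℕ} {p : Fin n → ℝ} {q : Fin m → ℝ}
    (hp : IsProbVec p) (hq : IsProbVec q) {M : Fin n → Fin m → ℝ} (hM : IsCoupling M p q)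
    (A : Finset (Fin n × Fin m)) (i : ℕ) (hA : A.card ≤ i) :
    ∑ x ∈ A, M x.1 x.2 ≤ min (prefSum p i) (prefSum q i) := by
  obtain ⟨h0, hr, hc⟩ := hM
  refine le_min ?_ ?_
  · refine le_trans ?_ (sum_le_prefSum hp (A.image Prod.fst) i (Finset.card_image_le.trans hA))
    calc ∑ x ∈ A, M x.1 x.2 ≤ ∑ x ∈ A.image Prod.fst ×ˢ Finset.univ, M x.1 x.2 := by
          refine Finset.sum_le_sum_of_subset_of_nonneg (fun x hx => ?_) fun x _ _ => h0 _ _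
          simpa using ⟨x.2, hx⟩
      _ = _ := by
          rw [Finset.sum_product]
          exact Finset.sum_congr rfl fun k _ => hr k
  · refine le_trans ?_ (sum_le_prefSum hq (A.image Prod.snd) i (Finset.card_image_le.trans hA))
    calc ∑ x ∈ A, M x.1 x.2 ≤ ∑ x ∈ Finset.univ ×ˢ A.image Prod.snd, M x.1 x.2 := by
          refine Finset.sum_le_sum_of_subset_of_nonneg (fun x hx => ?_) fun x _ _ => h0 _ _
          simpa using ⟨x.1, hx⟩
      _ = _ := by
          rw [Finset.sum_product_right]
          exact Finset.sum_congr rfl fun k _ => hc k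

/-- Abel summation inequality: increasing weights against increments with nonpositive prefix
sums. -/
theorem abel_le (c d : ℕ → ℝ) (K : ℕ) (hc : ∀ k, k < K → c k ≤ c (k + 1))
    (hd : ∀ k, k ≤ K → ∑ j ∈ Finset.range (k + 1), d j ≤ 0) :
    c K * ∑ j ∈ Finset.range (K + 1), d j ≤ ∑ k ∈ Finset.range (K + 1), c k * d k := by
  induction K with
  | zero => simp
  | succ K ih =>
    have h1 := ih (fun k hk => hc k (by omega)) (fun k hk => hd k (by omega))
    have h2 := hd K (by omega)
    have h3 := hc K (by omega)
    rw [Finset.sum_range_succ d, Finset.sum_range_succ (fun k => c k * d k)]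
    nlinarith

theorem gibbs_term {z r : ℝ} (hz : 0 ≤ z) (hr : 0 < r) :
    -(z * Real.log z) ≤ -Real.log r * z + (r - z) := by
  rcases hz.eq_or_lt with rfl | hz
  · simpa using hr.le
  · have h := Real.log_le_sub_one_of_pos (div_pos hr hz)
    rw [Real.log_div hr.ne' hz.ne'] at h
    have h2 := mul_le_mul_of_nonneg_left h hz.le
    have h3 : z * (r / z - 1) = r - z := by field_simp
    linarith

/-- Majorization inequality for entropy: `z` has prefix sums at least those of the decreasing
positive sequence `r`, with equal totals. -/
theorem entropy_le (z r : ℕ → ℝ) (K : ℕ) (hz : ∀ k, 0 ≤ z k) (hr : ∀ k, k < K → 0 < r k)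
    (hanti : ∀ k, k + 1 < K → r (k + 1) ≤ r k)
    (hle : ∀ k, k ≤ K → ∑ j ∈ Finset.range k, r j ≤ ∑ j ∈ Finset.range k, z j)
    (heq : ∑ j ∈ Finset.range K, r j = ∑ j ∈ Finset.range K, z j) :
    ∑ k ∈ Finset.range K, -(z k * Real.log (z k)) ≤
      ∑ k ∈ Finset.range K, -(r k * Real.log (r k)) := by
  rcases K with _ | K
  · simp
  have hA := abel_le (fun k => -Real.log (r k)) (fun k => r k - z k) K
    (fun k hk => neg_le_neg (Real.log_le_log (hr _ (by omega)) (hanti k (by omega))))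
    (fun k hk => by
      rw [Finset.sum_sub_distrib]
      linarith [hle (k + 1) (by omega)])
  have hD : ∑ j ∈ Finset.range (K + 1), (r j - z j) = 0 := by
    rw [Finset.sum_sub_distrib, heq, sub_self]
  rw [hD, mul_zero] at hA
  have hG : ∑ k ∈ Finset.range (K + 1), -(z k * Real.log (z k)) ≤
      ∑ k ∈ Finset.range (K + 1), (-Real.log (r k) * z k + (r k - z k)) :=
    Finset.sum_le_sum fun k hk => gibbs_term (hz k) (hr k (Finset.mem_range.1 hk))
  rw [Finset.sum_add_distrib, hD, add_zero] at hG
  have hE : ∑ k ∈ Finset.range (K + 1), -Real.log (r k) * (r k - z k) =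
      ∑ k ∈ Finset.range (K + 1), -(r k * Real.log (r k)) -
        ∑ k ∈ Finset.range (K + 1), -Real.log (r k) * z k := by
    rw [← Finset.sum_sub_distrib]
    exact Finset.sum_congr rfl fun k _ => by ring
  linarith

/-- The elements of a finite set can be listed with decreasing values of `f`. -/
theorem exists_antitone_enum {α : Type*} (S : Finset α) (f : α → ℝ) :
    ∃ σ : Fin S.card ≃ S, Antitone fun k => f (σ k) := by
  let e := S.equivFin.symm
  let g : Fin S.card → ℝ := fun k => -f (e k)
  refine ⟨(Tuple.sort g).trans e, fun a b hab => ?_⟩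
  have := Tuple.monotone_sort g hab
  simpa [g] using this

/-- for any `p ∈ P_n`, `q ∈ P_m` and any coupling `M ∈ C(p,q)`,
`H(M) ≥ H(p ∧ q)`; consequently `min_{N ∈ C(p,q)} H(N) ≥ H(p ∧ q)`. -/
theorem coupling_entropy_ge_glb {n m : ℕ} (p : Fin n → ℝ) (q : Fin m → ℝ)
    (hp : IsProbVec p) (hq : IsProbVec q)
    (M : Fin n → Fin m → ℝ) (hM : IsCoupling M p q) :
    H2mat M ≥ H2 (glbVec (padTo p (max n m)) (padTo q (max n m))) := by
  set N := max n m with hN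
  have hnN : n ≤ N := le_max_left n m
  have hmN : m ≤ N := le_max_right n m
  let Z : ℕ → ℝ := fun i => min (prefSum p i) (prefSum q i)
  let z : ℕ → ℝ := fun k => Z (k + 1) - Z k
  have hZmono : Monotone Z := (prefSum_mono hp.2.1).min (prefSum_mono hq.2.1)
  have hz : ∀ k, 0 ≤ z k := fun k => sub_nonneg.2 (hZmono (Nat.le_succ k))
  have hZ0 : Z 0 = 0 := by simp [Z, prefSum_zero]
  have hZN : ∀ i, N ≤ i → Z i = 1 := fun i hi => by
    simp only [Z]
    rw [prefSum_of_le p (by omega), prefSum_of_le q (by omega), hp.2.2, hq.2.2, min_self]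
  have hzsum : ∀ i, ∑ k ∈ Finset.range i, z k = Z i := fun i => by
    rw [Finset.sum_range_sub, hZ0, sub_zero]
  have hZle : ∀ i, Z i ≤ 1 := fun i =>
    (hZmono (le_max_left i N)).trans (hZN _ (le_max_right i N)).le
  let S : Finset (Fin n × Fin m) := Finset.univ.filter fun x => M x.1 x.2 ≠ 0
  obtain ⟨K, σ, hσ⟩ : ∃ (K : ℕ) (σ : Fin K ≃ S), Antitone fun k => M (σ k).1.1 (σ k).1.2 :=
    ⟨_, exists_antitone_enum S fun x => M x.1 x.2⟩
  let r : ℕ → ℝ := fun k =>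
    if h : k < K then M (σ ⟨k, h⟩).1.1 (σ ⟨k, h⟩).1.2 else 0
  have hrpos : ∀ k, k < K → 0 < r k := fun k hk => by
    simp only [r, dif_pos hk]
    exact lt_of_le_of_ne (hM.1 _ _) (Ne.symm (Finset.mem_filter.1 (σ ⟨k, hk⟩).2).2)
  have hanti : ∀ k, k + 1 < K → r (k + 1) ≤ r k := fun k hk => by
    have hk' : k < K := by omega
    simp only [r, dif_pos hk, dif_pos hk']
    exact hσ (show (⟨k, hk'⟩ : Fin K) ≤ ⟨k + 1, hk⟩ from Fin.le_def.2 (Nat.le_succ k))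
  have hrsum : ∀ g : ℝ → ℝ, g 0 = 0 →
      ∑ k ∈ Finset.range K, g (r k) = ∑ i, ∑ j, g (M i j) := fun g hg => by
    rw [← Fin.sum_univ_eq_sum_range (fun k => g (r k)) K]
    have h1 : ∑ k : Fin K, g (r k) = ∑ k : Fin K, g (M (σ k).1.1 (σ k).1.2) :=
      Finset.sum_congr rfl fun k _ => by simp [r]
    rw [h1, Equiv.sum_comp σ (fun x => g (M x.1.1 x.1.2)),
      Finset.sum_coe_sort S (fun x => g (M x.1 x.2)), ← Fintype.sum_prod_type']
    refine Finset.sum_subset (Finset.subset_univ _) fun x _ hx => ?_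
    have : M x.1 x.2 = 0 := by simpa [S] using hx
    rw [this, hg]
  have hrtot : ∑ k ∈ Finset.range K, r k = 1 := by
    rw [hrsum (fun x => x) rfl, ← hp.2.2]
    exact Finset.sum_congr rfl fun i _ => hM.2.1 i
  have hrle : ∀ k, k ≤ K → ∑ j ∈ Finset.range k, r j ≤ Z k := fun k hk => by
    let f : Fin k → Fin n × Fin m := fun j => (σ (Fin.castLE hk j)).1
    have hf : Function.Injective f := fun a b hab => by
      have := σ.injective (Subtype.ext hab)
      exact Fin.castLE_injective hk this
    have h1 := sum_cells_le hp hq hM (Finset.univ.map ⟨f, hf⟩) k (by simp)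
    rw [Finset.sum_map] at h1
    rw [← Fin.sum_univ_eq_sum_range r k]
    refine le_trans (le_of_eq (Finset.sum_congr rfl fun j _ => ?_)) h1
    have : (j : ℕ) < K := by omega
    simp only [r, dif_pos this]
    rfl
  have hZK : Z K = 1 := le_antisymm (hZle K) (hrtot ▸ hrle K le_rfl)
  have hmain := entropy_le z r K hz hrpos hanti (fun k hk => (hzsum k).symm ▸ hrle k hk)
    (by rw [hrtot, hzsum, hZK])
  -- `z` vanishes from any index on at which `Z` has reached `1`.
  have hext : ∀ L, Z L = 1 → ∀ L', L ≤ L' →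
      ∑ k ∈ Finset.range L, -(z k * Real.log (z k)) =
        ∑ k ∈ Finset.range L', -(z k * Real.log (z k)) := fun L hL L' hLL => by
    refine Finset.sum_subset (Finset.range_mono hLL) fun k _ hk => ?_
    have hk : L ≤ k := by simpa using hk
    have h1 := hZmono hk
    have h2 : z k = 0 := le_antisymm (by simp only [z]; linarith [hZle (k + 1)]) (hz k)
    simp [h2]
  have hNK := (hext N (hZN N le_rfl) _ (le_max_left N K)).trans
    (hext K hZK _ (le_max_right N K)).symm
  rw [hrsum (fun x => -(x * Real.log x)) (by simp), ← hNK] at hmain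
  have hL : H2 (glbVec (padTo p N) (padTo q N)) =
      (∑ k ∈ Finset.range N, -(z k * Real.log (z k))) / Real.log 2 := by
    rw [← Fin.sum_univ_eq_sum_range (fun k => -(z k * Real.log (z k))) N, Finset.sum_div]
    refine Finset.sum_congr rfl fun k _ => ?_
    have : glbVec (padTo p N) (padTo q N) k = z k := by
      simp only [glbVec, z, Z, prefSum_padTo p hnN, prefSum_padTo q hmN]
    rw [this, Real.logb]
    ring
  have hR : H2mat M = (∑ i, ∑ j, -(M i j * Real.log (M i j))) / Real.log 2 := by
    simp only [H2mat, Finset.sum_div]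
    refine Finset.sum_congr rfl fun i _ => Finset.sum_congr rfl fun j _ => ?_
    rw [Real.logb]
    ring
  rw [ge_iff_le, hL, hR]
  exact div_le_div_of_nonneg_right hmain (Real.log_pos one_lt_two).le
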